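/- arXiv:1610.05435 — 3 statements merged into one kernel-verified Lean document; each statement's English description precedes it below -/
import Mathlib

section
/- In the degradation construction, the Markov property also holds conditionally on the high-priority label: under the conditional probability measure given B_H = b_H (for any b_H ∈ {0,1}^{m_H} of positive probability), each low-priority bit B_L^j and the degraded output Y are conditionally independent given the stronger output Ŷ; i.e. for every b_H, the chain B_L^j → Ŷ → Y holds under P(· | B_H = b_H). -/
open MeasureTheory ProbabilityTheory
open scoped ENNReal NNReal

/-- The centered complex Gaussian law of variance `v`: real and imaginary parts are independent
centered real Gaussians of variance `v/2`. -/
noncomputable def complexGaussian (v : ℝ≥0) : Measure ℂ :=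
  ((gaussianReal 0 (v / 2)).prod (gaussianReal 0 (v / 2))).map
    (fun p => (p.1 : ℂ) + (p.2 : ℂ) * Complex.I)

/-- Kullback-Leibler divergence in base 2 (in bits). -/
noncomputable def klDiv2 {α : Type*} [MeasurableSpace α] (μ ν : Measure α) : ℝ :=
  ∫ x, Real.logb 2 ((μ.rnDeriv ν x).toReal) ∂μ

/-- Mutual information (base 2) of two random variables: KL divergence of the joint law from
the product of the marginal laws. -/
noncomputable def mutualInfo {Ω α β : Type*} [MeasurableSpace Ω] [MeasurableSpace α]
    [MeasurableSpace β] (P : Measure Ω) (X : Ω → α) (Y : Ω → β) : ℝ :=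
  klDiv2 (P.map fun ω => (X ω, Y ω)) ((P.map X).prod (P.map Y))

/-- Conditional mutual information given a finite-valued random variable `B`:
`I(X;Y|B) = ∑ b, P(B = b) · I(X;Y)` computed under the conditional measure `P[|B = b]`. -/
noncomputable def condMutualInfo {Ω α β γ : Type*} [MeasurableSpace Ω] [MeasurableSpace α]
    [MeasurableSpace β] [MeasurableSpace γ] [Fintype γ] (P : Measure Ω) (X : Ω → α) (Y : Ω → β)
    (B : Ω → γ) : ℝ :=
  ∑ b : γ, (P (B ⁻¹' {b})).toReal * mutualInfo (P[|B ⁻¹' {b}]) X Y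

lemma map_prod_aux {Ω α : Type*} [MeasurableSpace Ω] [MeasurableSpace α]
    (Q : Measure Ω) [IsProbabilityMeasure Q] (W : Ω → α) (N : Ω → ℂ)
    (hW : Measurable W) (hN : Measurable N) (hi : IndepFun W N Q)
    (φ : α → ℂ) (hφ : Measurable φ) (g : ℂ × ℂ → ℂ) (hg : Measurable g) :
    Q.map (fun ω => (W ω, g (φ (W ω), N ω))) =
      Q.map W ⊗ₘ (((Kernel.id ×ₖ Kernel.const ℂ (Q.map N)).map g).comap φ hφ) := by
  have : IsProbabilityMeasure (Q.map N) := Measure.isProbabilityMeasure_map hN.aemeasurable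
  have : IsProbabilityMeasure (Q.map W) := Measure.isProbabilityMeasure_map hW.aemeasurable
  have : IsMarkovKernel ((Kernel.id ×ₖ Kernel.const ℂ (Q.map N)).map g) :=
    Kernel.IsMarkovKernel.map _ hg
  have hF : Measurable (fun p : α × ℂ => (p.1, g (φ p.1, p.2))) := by fun_prop
  have h1 : Q.map (fun ω => (W ω, g (φ (W ω), N ω))) =
      ((Q.map W).prod (Q.map N)).map (fun p : α × ℂ => (p.1, g (φ p.1, p.2))) := by
    rw [← (indepFun_iff_map_prod_eq_prod_map_map hW.aemeasurable hN.aemeasurable).1 hi,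
      Measure.map_map hF (by fun_prop)]
    rfl
  rw [h1]
  ext s hs
  rw [Measure.map_apply hF hs, Measure.prod_apply (hF hs), Measure.compProd_apply hs]
  congr 1 with a
  have hs' : MeasurableSet (Prod.mk a ⁻¹' s) := measurable_prodMk_left hs
  rw [Kernel.comap_apply, Kernel.map_apply' _ hg _ hs', Kernel.prod_apply, Kernel.id_apply,
    Kernel.const_apply, Measure.dirac_prod, Measure.map_apply measurable_prodMk_left (hg hs')]
  rfl

lemma condIndep_aux {Ω : Type*} [MeasurableSpace Ω] [StandardBorelSpace Ω] [Nonempty Ω]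
    (Q : Measure Ω) [IsProbabilityMeasure Q] (X : Ω → Bool) (k N : Ω → ℂ)
    (hX : Measurable X) (hk : Measurable k) (hN : Measurable N)
    (hi : IndepFun (fun ω => (k ω, X ω)) N Q) (g : ℂ × ℂ → ℂ) (hg : Measurable g) :
    CondIndepFun (MeasurableSpace.comap k inferInstance) hk.comap_le
      X (fun ω => g (k ω, N ω)) Q := by
  have : IsProbabilityMeasure (Q.map N) := Measure.isProbabilityMeasure_map hN.aemeasurable
  have : IsMarkovKernel ((Kernel.id ×ₖ Kernel.const ℂ (Q.map N)).map g) :=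
    Kernel.IsMarkovKernel.map _ hg
  have hY : Measurable (fun ω => g (k ω, N ω)) := by fun_prop
  rw [condIndepFun_iff_condDistrib_prod_ae_eq_prodMkRight hY hX hk]
  have h1 := condDistrib_ae_eq_of_measure_eq_compProd (fun ω => (k ω, X ω)) hY.aemeasurable
    (map_prod_aux Q (fun ω => (k ω, X ω)) N (by fun_prop) hN hi Prod.fst measurable_fst g hg)
  have hi2 : IndepFun k N Q := hi.comp measurable_fst measurable_id
  have h2 := condDistrib_ae_eq_of_measure_eq_compProd k hY.aemeasurable
    (map_prod_aux Q k N hk hN hi2 id measurable_id g hg)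
  have h3 : Q.map k = (Q.map (fun ω => (k ω, X ω))).map Prod.fst := by
    rw [Measure.map_map measurable_fst (by fun_prop)]; rfl
  rw [h3] at h2
  have h4 := ae_of_ae_map measurable_fst.aemeasurable h2
  filter_upwards [h1, h4] with p hp1 hp2
  rw [hp1, Kernel.prodMkRight_apply]
  rw [hp2, Kernel.comap_apply, Kernel.comap_apply]
  rfl

lemma indep_cond_aux {Ω α : Type*} [MeasurableSpace Ω] [MeasurableSpace α]
    (P : Measure Ω) [IsProbabilityMeasure P] (W : Ω → α) (N : Ω → ℂ)
    (hW : Measurable W) (hi : IndepFun W N P)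
    (S : Set α) (hS : MeasurableSet S) (hP : P (W ⁻¹' S) ≠ 0) :
    IndepFun W N (P[|W ⁻¹' S]) := by
  rw [indepFun_iff_measure_inter_preimage_eq_mul] at hi ⊢
  intro s t hs ht
  rw [cond_apply (hW hS), cond_apply (hW hS), cond_apply (hW hS), ← Set.inter_assoc,
    ← Set.preimage_inter, hi _ _ (hS.inter hs) ht, hi _ _ hS ht]
  rw [← mul_assoc (P (W ⁻¹' S))⁻¹ (P (W ⁻¹' S)), ENNReal.inv_mul_cancel hP (measure_ne_top _ _),
    one_mul, mul_assoc]

/-!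
STATEMENT 2: In the degradation construction, the Markov property also holds conditionally on the
high-priority label: under the conditional probability measure given `B_H = b_H` (for any `b_H`
of positive probability), each low-priority bit `B_L^j` and the degraded output `Y` are
conditionally independent given the stronger output `Ŷ`, i.e. `B_L^j → Ŷ → Y` under
`P(· | B_H = b_H)`.
-/
theorem hm_degradation_markov_cond
    {Ω : Type*} [MeasurableSpace Ω] [StandardBorelSpace Ω] [Nonempty Ω]
    (P : Measure Ω) [IsProbabilityMeasure P]
    (mH mL : ℕ) (hmH : 0 < mH) (hmL : 0 < mL)
    (μc : (Fin mH → Bool) × (Fin mL → Bool) → ℂ)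
    (BH : Ω → Fin mH → Bool) (BL : Ω → Fin mL → Bool)
    (hBH : Measurable BH) (hBL : Measurable BL)
    (hUnif : P.map (fun ω => (BH ω, BL ω)) =
      (PMF.uniformOfFintype ((Fin mH → Bool) × (Fin mL → Bool))).toMeasure)
    (ρ : ℝ) (hρ : 1 ≤ ρ) (σ2 : ℝ≥0) (hσ2 : 0 < σ2)
    (Nhat Ntilde : Ω → ℂ) (hNhatMeas : Measurable Nhat) (hNtildeMeas : Measurable Ntilde)
    (lawNhat : P.map Nhat = complexGaussian σ2)
    (lawNtilde : P.map Ntilde = complexGaussian (σ2 * (1 - 1 / ρ ^ 2).toNNReal))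
    (hIndepNhat : IndepFun (fun ω => (BH ω, BL ω)) Nhat P)
    (hIndepNtilde : IndepFun (fun ω => ((BH ω, BL ω), Nhat ω)) Ntilde P)
    (Z Yhat Y : Ω → ℂ)
    (hZ : Z = fun ω => μc (BH ω, BL ω))
    (hYhat : Yhat = fun ω => (ρ : ℂ) * Z ω + Nhat ω)
    (hY : Y = fun ω => ((ρ : ℂ))⁻¹ * Yhat ω + Ntilde ω)
    (hYhatMeas : Measurable Yhat)
    (bH : Fin mH → Bool) (hbH : P (BH ⁻¹' {bH}) ≠ 0) :
    ∀ j : Fin mL,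
      CondIndepFun (MeasurableSpace.comap Yhat inferInstance) hYhatMeas.comap_le
        (fun ω => BL ω j) Y (P[|BH ⁻¹' {bH}]) := by
  intro j
  have hS : MeasurableSet {p : ((Fin mH → Bool) × (Fin mL → Bool)) × ℂ | p.1.1 = bH} :=
    (measurable_fst.fst) (measurableSet_singleton bH)
  have := cond_isProbabilityMeasure (μ := P) hbH
  have hi := indep_cond_aux P (fun ω => ((BH ω, BL ω), Nhat ω)) Ntilde (by fun_prop)
    hIndepNtilde _ hS hbH
  have hi2 : IndepFun (fun ω => ((BH ω, BL ω), Nhat ω)) Ntilde (P[|BH ⁻¹' {bH}]) := hi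
  have hμ : Measurable μc := measurable_of_finite μc
  have hψ : Measurable (fun p : ((Fin mH → Bool) × (Fin mL → Bool)) × ℂ =>
      ((ρ : ℂ) * μc p.1 + p.2, p.1.2 j)) := by fun_prop
  have hi3 : IndepFun (fun ω => (Yhat ω, BL ω j)) Ntilde (P[|BH ⁻¹' {bH}]) := by
    have := hi2.comp hψ measurable_id
    subst hYhat hZ
    exact this
  have hfin := condIndep_aux (P[|BH ⁻¹' {bH}]) (fun ω => BL ω j) Yhat Ntilde (by fun_prop)
    hYhatMeas hNtildeMeas hi3 (fun p => ((ρ : ℂ))⁻¹ * p.1 + p.2) (by fun_prop)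
  rw [hY]
  exact hfin
end

section
/- Amplifying a hierarchical constellation does not decrease any per-bit high-priority mutual information: for every ρ ≥ 1, every noise variance σ² > 0, and every index 1 ≤ i ≤ m_H, one has I(B_H^i ; ρZ + N) ≥ I(B_H^i ; Z + N), where N is a complex Gaussian noise of variance σ² independent of the labels. -/
open MeasureTheory ProbabilityTheory
open scoped ENNReal NNReal

open InformationTheory in
lemma klDiv_ne_top_of_le_smul {α : Type*} [MeasurableSpace α] (μ ν : Measure α)
    [IsProbabilityMeasure μ] [IsProbabilityMeasure ν] (C : ℝ≥0) (h : μ ≤ C • ν) :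
    μ ≪ ν ∧ klDiv μ ν ≠ ∞ := by
  have hac : μ ≪ ν := (Measure.absolutelyContinuous_of_le h).trans
    (Measure.smul_absolutelyContinuous)
  refine ⟨hac, ?_⟩
  have hle : μ.rnDeriv ν ≤ᵐ[ν] fun _ => (C : ℝ≥0∞) := by
    refine ae_le_of_forall_setLIntegral_le_of_sigmaFinite (μ.measurable_rnDeriv ν) fun s _ _ ↦ ?_
    simp only [lintegral_const, Measure.restrict_apply MeasurableSet.univ, Set.univ_inter]
    exact (Measure.setLIntegral_rnDeriv_le s).trans (by simpa using h s)
  refine klDiv_ne_top hac ?_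
  rw [← integrable_klFun_rnDeriv_iff hac]
  obtain ⟨K, hK⟩ := (isCompact_Icc (a := (0 : ℝ)) (b := C)).exists_bound_of_continuousOn
    continuous_klFun.continuousOn
  refine Integrable.of_bound (Measurable.aestronglyMeasurable (by fun_prop)) K ?_
  filter_upwards [hle] with x hx
  apply hK
  refine ⟨ENNReal.toReal_nonneg, ?_⟩
  have := ENNReal.toReal_mono ENNReal.coe_ne_top hx
  simpa using this

open InformationTheory in
lemma klDiv2_eq_of_ac {α : Type*} [MeasurableSpace α] (μ ν : Measure α)
    [IsProbabilityMeasure μ] [IsProbabilityMeasure ν] (h : μ ≪ ν) :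
    klDiv2 μ ν = (klDiv μ ν).toReal / Real.log 2 := by
  rw [toReal_klDiv_of_measure_eq h (by simp), klDiv2, ← integral_div]
  rfl

lemma joint_le_smul {Ω β : Type*} [MeasurableSpace Ω] [MeasurableSpace β] (P : Measure Ω)
    [IsProbabilityMeasure P] (X : Ω → Bool) (Y : Ω → β) (hX : Measurable X) (hY : Measurable Y)
    (hpos : ∀ x, P (X ⁻¹' {x}) ≠ 0) :
    ∃ C : ℝ≥0, P.map (fun ω => (X ω, Y ω)) ≤ C • ((P.map X).prod (P.map Y)) := by
  have : IsProbabilityMeasure (P.map Y) := Measure.isProbabilityMeasure_map hY.aemeasurable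
  obtain ⟨c, hc0, hc⟩ : ∃ c : ℝ≥0, c ≠ 0 ∧ ∀ x, (c : ℝ≥0∞) ≤ P (X ⁻¹' {x}) := by
    refine ⟨min (P (X ⁻¹' {true})).toNNReal (P (X ⁻¹' {false})).toNNReal, ?_, ?_⟩
    · have h1 := hpos true
      have h2 := hpos false
      have h3 : 0 < (P (X ⁻¹' {true})).toNNReal := ENNReal.toNNReal_pos h1 (measure_ne_top _ _)
      have h4 : 0 < (P (X ⁻¹' {false})).toNNReal := ENNReal.toNNReal_pos h2 (measure_ne_top _ _)
      exact (lt_min h3 h4).ne'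
    · intro x
      cases x
      · exact (ENNReal.coe_le_coe.2 (min_le_right _ _)).trans ENNReal.coe_toNNReal_le_self
      · exact (ENNReal.coe_le_coe.2 (min_le_left _ _)).trans ENNReal.coe_toNNReal_le_self
  refine ⟨c⁻¹, ?_⟩
  refine Measure.le_iff.2 fun s hs => ?_
  have hν : (c : ℝ≥0∞) * (P.map (fun ω => (X ω, Y ω))) s ≤ ((P.map X).prod (P.map Y)) s := by
    rw [Measure.prod_apply hs, lintegral_fintype, Measure.map_apply (by fun_prop) hs]
    calc (c : ℝ≥0∞) * P ((fun ω => (X ω, Y ω)) ⁻¹' s)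
        ≤ c * ∑ x : Bool, P (Y ⁻¹' (Prod.mk x ⁻¹' s)) := by
          gcongr
          refine le_trans (measure_mono ?_)
            (measure_biUnion_finset_le Finset.univ (fun x : Bool => Y ⁻¹' (Prod.mk x ⁻¹' s)))
          intro ω hω
          simp only [Set.mem_iUnion, Finset.mem_univ]
          exact ⟨X ω, trivial, hω⟩
      _ ≤ _ := by
          rw [Finset.mul_sum]
          refine Finset.sum_le_sum fun x _ => ?_
          rw [Measure.map_apply hY (measurable_prodMk_left hs),
            Measure.map_apply hX (measurableSet_singleton x), mul_comm]
          gcongr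
          exact hc x
  have hc0' : (c : ℝ≥0∞) ≠ 0 := by simpa using hc0
  calc (P.map (fun ω => (X ω, Y ω))) s
      = (c : ℝ≥0∞)⁻¹ * (c * (P.map (fun ω => (X ω, Y ω))) s) := by
        rw [← mul_assoc, ENNReal.inv_mul_cancel hc0' ENNReal.coe_ne_top, one_mul]
    _ ≤ (c : ℝ≥0∞)⁻¹ * ((P.map X).prod (P.map Y)) s := by gcongr
    _ = _ := by
        rw [← ENNReal.coe_inv hc0]
        rfl

instance instProbCG (v : ℝ≥0) : IsProbabilityMeasure (complexGaussian v) := by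
  unfold complexGaussian
  exact Measure.isProbabilityMeasure_map (by fun_prop)

lemma charFun_complexGaussian (v : ℝ≥0) (t : ℂ) :
    charFun (complexGaussian v) t = Complex.exp (-(v : ℂ) * ((t.re : ℂ) ^ 2 + (t.im : ℂ) ^ 2) / 4) := by
  rw [charFun_apply, complexGaussian, integral_map (by fun_prop) (by fun_prop)]
  have h1 := charFun_gaussianReal (μ := 0) (v := v / 2) t.re
  have h2 := charFun_gaussianReal (μ := 0) (v := v / 2) t.im
  rw [charFun_apply_real] at h1 h2
  have : ∀ p : ℝ × ℝ, Complex.exp ((inner ℝ ((p.1 : ℂ) + (p.2 : ℂ) * Complex.I) t : ℝ) * Complex.I)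
      = Complex.exp (t.re * p.1 * Complex.I) * Complex.exp (t.im * p.2 * Complex.I) := by
    intro p
    rw [← Complex.exp_add]
    congr 1
    simp [Complex.inner]
    ring
  simp_rw [this]
  rw [integral_prod_mul (fun x : ℝ => Complex.exp (t.re * x * Complex.I))
    (fun x : ℝ => Complex.exp (t.im * x * Complex.I)), h1, h2, ← Complex.exp_add]
  congr 1
  push_cast
  ring

lemma complexGaussian_mix (v : ℝ≥0) (ρ : ℝ) (hρ : 1 ≤ ρ) :
    ((complexGaussian v).prod (complexGaussian (v * (1 - ρ⁻¹ ^ 2).toNNReal))).map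
      (fun p => (ρ⁻¹ : ℝ) • p.1 + p.2) = complexGaussian v := by
  have hle : (0 : ℝ) ≤ 1 - ρ⁻¹ ^ 2 := by
    have h1 : ρ⁻¹ ≤ 1 := inv_le_one_of_one_le₀ hρ
    have h0 : 0 ≤ ρ⁻¹ := by positivity
    nlinarith
  set w := v * (1 - ρ⁻¹ ^ 2).toNNReal with hw
  have hwc : (w : ℂ) = v * (1 - (ρ : ℂ)⁻¹ ^ 2) := by
    have : (w : ℝ) = v * (1 - ρ⁻¹ ^ 2) := by
      rw [hw, NNReal.coe_mul, Real.coe_toNNReal _ hle]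
    have h2 : ((w : ℝ) : ℂ) = ((v * (1 - ρ⁻¹ ^ 2) : ℝ) : ℂ) := by rw [this]
    push_cast at h2
    exact h2
  have hm : Measurable (fun z : ℂ => (ρ⁻¹ : ℝ) • z) := by fun_prop
  have : IsProbabilityMeasure ((complexGaussian v).map (fun z : ℂ => (ρ⁻¹ : ℝ) • z)) :=
    Measure.isProbabilityMeasure_map hm.aemeasurable
  have e : ((complexGaussian v).prod (complexGaussian w)).map
      (fun p => (ρ⁻¹ : ℝ) • p.1 + p.2)
      = ((complexGaussian v).map (fun z : ℂ => (ρ⁻¹ : ℝ) • z)).conv (complexGaussian w) := by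
    rw [Measure.conv]
    nth_rewrite 2 [← Measure.map_id (μ := complexGaussian w)]
    rw [Measure.map_prod_map _ _ hm measurable_id, Measure.map_map (by fun_prop) (by fun_prop)]
    rfl
  rw [e]
  apply Measure.ext_of_charFun
  ext t
  rw [charFun_conv, charFun_map_smul, charFun_complexGaussian, charFun_complexGaussian,
    charFun_complexGaussian, ← Complex.exp_add, hwc]
  congr 1
  simp
  ring

theorem hm_amplify_HP_bit_MI
    {Ω : Type*} [MeasurableSpace Ω] (P : Measure Ω) [IsProbabilityMeasure P]
    (mH mL : ℕ) (hmH : 0 < mH) (hmL : 0 < mL)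
    (μc : (Fin mH → Bool) × (Fin mL → Bool) → ℂ)
    (BH : Ω → Fin mH → Bool) (BL : Ω → Fin mL → Bool)
    (hBH : Measurable BH) (hBL : Measurable BL)
    (hUnif : P.map (fun ω => (BH ω, BL ω)) =
      (PMF.uniformOfFintype ((Fin mH → Bool) × (Fin mL → Bool))).toMeasure)
    (σ2 : ℝ≥0) (hσ2 : 0 < σ2)
    (N : Ω → ℂ) (hNMeas : Measurable N)
    (lawN : P.map N = complexGaussian σ2)
    (hIndepN : IndepFun (fun ω => (BH ω, BL ω)) N P)
    (ρ : ℝ) (hρ : 1 ≤ ρ) (i : Fin mH) :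
    mutualInfo P (fun ω => BH ω i) (fun ω => (ρ : ℂ) * μc (BH ω, BL ω) + N ω) ≥
      mutualInfo P (fun ω => BH ω i) (fun ω => μc (BH ω, BL ω) + N ω) := by
  classical
  have hρ0 : (ρ : ℂ) ≠ 0 := by
    have : ρ ≠ 0 := by positivity
    exact_mod_cast this
  set B : Ω → (Fin mH → Bool) × (Fin mL → Bool) := fun ω => (BH ω, BL ω) with hBdef
  have hB : Measurable B := hBH.prodMk hBL
  have hμc : Measurable μc := measurable_of_finite μc
  set W := complexGaussian (σ2 * (1 - ρ⁻¹ ^ 2).toNNReal) with hW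
  have hX : Measurable (fun ω => BH ω i) := (measurable_pi_apply i).comp hBH
  have hZ : Measurable (fun ω => μc (BH ω, BL ω)) := hμc.comp hB
  have hY1 : Measurable (fun ω => μc (BH ω, BL ω) + N ω) := hZ.add hNMeas
  have hYρ : Measurable (fun ω => (ρ : ℂ) * μc (BH ω, BL ω) + N ω) := (hZ.const_mul _).add hNMeas
  have hpos : ∀ x, P ((fun ω => BH ω i) ⁻¹' {x}) ≠ 0 := by
    intro x h0
    have h1 : P.map B {((fun _ => x), (fun _ => true))} ≠ 0 := by
      rw [hUnif, PMF.toMeasure_apply_singleton _ _ (measurableSet_singleton _)]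
      simp
      exact ENNReal.mul_ne_top (by simp) (by simp)
    apply h1
    rw [Measure.map_apply hB (measurableSet_singleton _)]
    refine measure_mono_null ?_ h0
    intro ω hω
    have : B ω = ((fun _ => x), (fun _ => true)) := hω
    have h2 : BH ω = fun _ => x := congrArg Prod.fst this
    simp [h2]
  obtain ⟨C1, hC1⟩ := joint_le_smul P _ _ hX hY1 hpos
  obtain ⟨Cρ, hCρ⟩ := joint_le_smul P _ _ hX hYρ hpos
  have : IsProbabilityMeasure (P.map (fun ω => BH ω i)) :=
    Measure.isProbabilityMeasure_map hX.aemeasurable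
  have : IsProbabilityMeasure (P.map (fun ω => μc (BH ω, BL ω) + N ω)) :=
    Measure.isProbabilityMeasure_map hY1.aemeasurable
  have : IsProbabilityMeasure (P.map (fun ω => (ρ : ℂ) * μc (BH ω, BL ω) + N ω)) :=
    Measure.isProbabilityMeasure_map hYρ.aemeasurable
  have : IsProbabilityMeasure (P.map (fun ω => (BH ω i, μc (BH ω, BL ω) + N ω))) :=
    Measure.isProbabilityMeasure_map (hX.prodMk hY1).aemeasurable
  have : IsProbabilityMeasure (P.map (fun ω => (BH ω i, (ρ : ℂ) * μc (BH ω, BL ω) + N ω))) :=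
    Measure.isProbabilityMeasure_map (hX.prodMk hYρ).aemeasurable
  have : IsProbabilityMeasure (P.map B) := Measure.isProbabilityMeasure_map hB.aemeasurable
  obtain ⟨ac1, -⟩ := klDiv_ne_top_of_le_smul _ _ C1 hC1
  obtain ⟨acρ, finρ⟩ := klDiv_ne_top_of_le_smul _ _ Cρ hCρ
  have hBN : P.map (fun ω => (B ω, N ω)) = (P.map B).prod (complexGaussian σ2) := by
    rw [(indepFun_iff_map_prod_eq_prod_map_map hB.aemeasurable hNMeas.aemeasurable).1 hIndepN,
      lawN]
  -- the post-processing map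
  let g : (Bool × ℂ) × ℂ → Bool × ℂ := fun q => (q.1.1, (ρ⁻¹ : ℝ) • q.1.2 + q.2)
  have hg : Measurable g := by fun_prop
  have hBi : Measurable (fun b : (Fin mH → Bool) × (Fin mL → Bool) => b.1 i) :=
    measurable_of_finite _
  have joint : ((P.map (fun ω => (BH ω i, (ρ : ℂ) * μc (BH ω, BL ω) + N ω))).prod W).map g
      = P.map (fun ω => (BH ω i, μc (BH ω, BL ω) + N ω)) := by
    have e1 : P.map (fun ω => (BH ω i, (ρ : ℂ) * μc (BH ω, BL ω) + N ω))
        = ((P.map B).prod (complexGaussian σ2)).map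
          (fun p => (p.1.1 i, (ρ : ℂ) * μc p.1 + p.2)) := by
      rw [← hBN, Measure.map_map (by fun_prop) (by fun_prop)]
      rfl
    have e2 : P.map (fun ω => (BH ω i, μc (BH ω, BL ω) + N ω))
        = ((P.map B).prod (complexGaussian σ2)).map (fun p => (p.1.1 i, μc p.1 + p.2)) := by
      rw [← hBN, Measure.map_map (by fun_prop) (by fun_prop)]
      rfl
    have hf : Measurable (fun p : ((Fin mH → Bool) × (Fin mL → Bool)) × ℂ =>
        (p.1.1 i, (ρ : ℂ) * μc p.1 + p.2)) := by fun_prop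
    rw [e1, e2]
    have e3 : (((P.map B).prod (complexGaussian σ2)).map
          (fun p => (p.1.1 i, (ρ : ℂ) * μc p.1 + p.2))).prod W
        = (((P.map B).prod (complexGaussian σ2)).prod W).map
          (Prod.map (fun p => (p.1.1 i, (ρ : ℂ) * μc p.1 + p.2)) id) := by
      rw [← Measure.map_prod_map _ _ hf measurable_id, Measure.map_id]
    have e4 : (P.map B).prod (complexGaussian σ2) =
        (((P.map B).prod (complexGaussian σ2)).prod W).map
          (fun q => (q.1.1, (ρ⁻¹ : ℝ) • q.1.2 + q.2)) := by
      conv_lhs => rw [← complexGaussian_mix σ2 ρ hρ, ← Measure.map_id (μ := P.map B)]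
      rw [Measure.map_prod_map _ _ measurable_id (by fun_prop), ← Measure.prodAssoc_prod,
        Measure.map_map (by fun_prop) (by fun_prop)]
      rfl
    rw [e3, Measure.map_map hg (by fun_prop)]
    conv_rhs => rw [e4]
    rw [Measure.map_map (by fun_prop) (by fun_prop)]
    congr 1
    ext1 q
    simp only [g, Function.comp, Prod.map, id]
    congr 1
    simp only [Complex.real_smul, Complex.ofReal_inv, mul_add, add_assoc]
    rw [inv_mul_cancel_left₀ hρ0]
  have margY : ((P.map (fun ω => (ρ : ℂ) * μc (BH ω, BL ω) + N ω)).prod W).map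
      (fun q => (ρ⁻¹ : ℝ) • q.1 + q.2) = P.map (fun ω => μc (BH ω, BL ω) + N ω) := by
    have h := congrArg (Measure.map Prod.snd) joint
    rw [Measure.map_map measurable_snd hg, Measure.map_map measurable_snd (by fun_prop)] at h
    have e5 : P.map (fun ω => (ρ : ℂ) * μc (BH ω, BL ω) + N ω) =
        (P.map (fun ω => (BH ω i, (ρ : ℂ) * μc (BH ω, BL ω) + N ω))).map Prod.snd := by
      rw [Measure.map_map measurable_snd (by fun_prop)]
      rfl
    rw [e5]
    nth_rewrite 1 [← Measure.map_id (μ := W)]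
    rw [Measure.map_prod_map _ _ measurable_snd measurable_id,
      Measure.map_map (by fun_prop) (by fun_prop)]
    exact h
  have prodl : (((P.map (fun ω => BH ω i)).prod
        (P.map (fun ω => (ρ : ℂ) * μc (BH ω, BL ω) + N ω))).prod W).map g
      = (P.map (fun ω => BH ω i)).prod (P.map (fun ω => μc (BH ω, BL ω) + N ω)) := by
    rw [← margY]
    conv_rhs => rw [← Measure.map_id (μ := P.map (fun ω => BH ω i))]
    rw [Measure.map_prod_map _ _ measurable_id (by fun_prop), ← Measure.prodAssoc_prod,
      Measure.map_map (by fun_prop) (by fun_prop)]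
    rfl
  unfold mutualInfo
  rw [klDiv2_eq_of_ac _ _ ac1, klDiv2_eq_of_ac _ _ acρ, ge_iff_le]
  refine div_le_div_of_nonneg_right ?_ (Real.log_nonneg (by norm_num))
  refine ENNReal.toReal_mono finρ ?_
  rw [← joint, ← prodl]
  refine (InformationTheory.klDiv_map_le _ _ hg).trans ?_
  rw [← Measure.compProd_const, ← Measure.compProd_const,
    InformationTheory.klDiv_compProd_left]
end

section
/- Enlarging a hierarchical constellation does not decrease the high-priority BICM rate: for every ρ ≥ 1 and noise variance σ_H² > 0, r_H(ρμ, σ_H²) ≥ r_H(μ, σ_H²), where ρμ is the constellation obtained by multiplying every point of μ by ρ; that is, Σ_{i=1}^{m_H} I(B_H^i ; ρZ + N_H) ≥ Σ_{i=1}^{m_H} I(B_H^i ; Z + N_H). -/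
open MeasureTheory ProbabilityTheory
open scoped ENNReal NNReal

/-!
STATEMENT 6: Enlarging a hierarchical constellation does not decrease the high-priority BICM
rate: for every `ρ ≥ 1` and noise variance `σ_H² > 0`,
`∑ i, I(B_H^i ; ρZ + N_H) ≥ ∑ i, I(B_H^i ; Z + N_H)`.
-/

open InformationTheory

lemma hm_charFun_cG (v : ℝ≥0) (t : ℂ) :
    charFun (complexGaussian v) t = Complex.exp (-((v : ℝ) * (t.re ^ 2 + t.im ^ 2) / 4 : ℝ)) := by
  have h0 : Measurable (fun p : ℝ × ℝ => (p.1 : ℂ) + (p.2 : ℂ) * Complex.I) := by fun_prop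
  rw [charFun_apply, complexGaussian, integral_map h0.aemeasurable (by fun_prop)]
  have h1 : ∀ p : ℝ × ℝ, Complex.exp ((inner ℝ ((p.1 : ℂ) + (p.2 : ℂ) * Complex.I) t : ℝ) * Complex.I)
      = Complex.exp (t.re * p.1 * Complex.I) * Complex.exp (t.im * p.2 * Complex.I) := by
    intro p
    rw [← Complex.exp_add]
    congr 1
    simp [Complex.inner]
    ring
  simp_rw [h1]
  rw [integral_prod_mul (fun x : ℝ => Complex.exp (t.re * x * Complex.I))
    (fun x : ℝ => Complex.exp (t.im * x * Complex.I)), ← charFun_apply_real, ← charFun_apply_real,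
    charFun_gaussianReal, charFun_gaussianReal, ← Complex.exp_add]
  congr 1
  push_cast
  ring

instance hm_cG_prob (v : ℝ≥0) : IsProbabilityMeasure (complexGaussian v) := by
  unfold complexGaussian
  exact Measure.isProbabilityMeasure_map (by fun_prop)

lemma hm_cG_scale (v w : ℝ≥0) (r : ℝ) (h : (v : ℝ) = r ^ 2 * v + w) :
    ((complexGaussian v).prod (complexGaussian w)).map (fun p => (r : ℂ) * p.1 + p.2)
      = complexGaussian v := by
  have h1 : ((complexGaussian v).prod (complexGaussian w)).map (fun p => (r : ℂ) * p.1 + p.2)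
      = ((complexGaussian v).map (r • ·)) ∗ complexGaussian w := by
    rw [Measure.conv]
    conv_rhs => rw [← Measure.map_id (μ := complexGaussian w)]
    rw [Measure.map_prod_map _ _ (by fun_prop) (by fun_prop),
      Measure.map_map (by fun_prop) (by fun_prop)]
    rfl
  have : IsProbabilityMeasure ((complexGaussian v).map (fun x : ℂ => r • x)) :=
    Measure.isProbabilityMeasure_map (by fun_prop)
  rw [h1]
  apply Measure.ext_of_charFun
  ext t
  rw [charFun_conv, charFun_map_smul, hm_charFun_cG, hm_charFun_cG, hm_charFun_cG,
    ← Complex.exp_add]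
  congr 1
  have : (v : ℝ) * (t.re ^ 2 + t.im ^ 2) / 4 = (r ^ 2 * v + w) * (t.re ^ 2 + t.im ^ 2) / 4 := by
    rw [← h]
  rw [this]
  simp
  ring

lemma hm_le {Ω : Type*} [MeasurableSpace Ω] (P : Measure Ω) [IsProbabilityMeasure P]
    (X : Ω → Bool) (Y : Ω → ℂ) (hX : Measurable X) (hY : Measurable Y) :
    ∃ C : ℝ≥0∞, C ≠ ∞ ∧ (P.map fun ω => (X ω, Y ω)) ≤ C • ((P.map X).prod (P.map Y)) := by
  classical
  let c : Bool → ℝ≥0∞ := fun b => if P (X ⁻¹' {b}) = 0 then 0 else (P (X ⁻¹' {b}))⁻¹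
  refine ⟨∑ b, c b, ?_, ?_⟩
  · refine ENNReal.sum_ne_top.2 fun b _ => ?_
    simp only [c]
    split_ifs with h
    · simp
    · simpa using h
  · have : IsProbabilityMeasure (P.map X) := Measure.isProbabilityMeasure_map (by fun_prop)
    have : IsProbabilityMeasure (P.map Y) := Measure.isProbabilityMeasure_map (by fun_prop)
    refine Measure.le_iff.2 fun A hA => ?_
    rw [Measure.map_apply (by fun_prop) hA, Measure.smul_apply, smul_eq_mul, Finset.sum_mul]
    have hsub : (fun ω => (X ω, Y ω)) ⁻¹' A ⊆
        ⋃ b ∈ (Finset.univ : Finset Bool), (X ⁻¹' {b} ∩ Y ⁻¹' (Prod.mk b ⁻¹' A)) := by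
      intro ω hω
      simp only [Finset.mem_univ, Set.iUnion_true, Set.mem_iUnion]
      exact ⟨X ω, rfl, hω⟩
    refine (measure_mono hsub).trans ((measure_biUnion_finset_le _ _).trans ?_)
    refine Finset.sum_le_sum fun b _ => ?_
    have hAb : MeasurableSet (Prod.mk b ⁻¹' A) := measurable_prodMk_left hA
    have hXb : MeasurableSet ({b} : Set Bool) := measurableSet_singleton b
    by_cases h : P (X ⁻¹' {b}) = 0
    · rw [measure_mono_null Set.inter_subset_left h]
      exact zero_le
    · calc P (X ⁻¹' {b} ∩ Y ⁻¹' (Prod.mk b ⁻¹' A)) ≤ P (Y ⁻¹' (Prod.mk b ⁻¹' A)) :=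
            measure_mono Set.inter_subset_right
        _ = c b * (P (X ⁻¹' {b}) * P (Y ⁻¹' (Prod.mk b ⁻¹' A))) := by
            simp only [c, h, if_false]
            rw [← mul_assoc, ENNReal.inv_mul_cancel h (measure_ne_top _ _), one_mul]
        _ = c b * ((P.map X).prod (P.map Y)) ({b} ×ˢ (Prod.mk b ⁻¹' A)) := by
            rw [Measure.prod_prod, Measure.map_apply hX hXb, Measure.map_apply hY hAb]
        _ ≤ _ := by
            gcongr
            rintro ⟨b', y⟩ ⟨h1, h2⟩
            simp only [Set.mem_singleton_iff] at h1
            subst h1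
            exact h2

lemma hm_klDiv_ne_top {α : Type*} [MeasurableSpace α] (J Q : Measure α) [IsProbabilityMeasure J]
    [IsProbabilityMeasure Q] (C : ℝ≥0∞) (hC : C ≠ ∞) (h : J ≤ C • Q) :
    J ≪ Q ∧ klDiv J Q ≠ ∞ := by
  have hac : J ≪ Q := Measure.absolutelyContinuous_of_le_smul h
  refine ⟨hac, klDiv_ne_top hac ?_⟩
  rw [← integrable_klFun_rnDeriv_iff hac]
  have hb : J.rnDeriv Q ≤ᵐ[Q] fun _ => C := by
    refine ae_le_of_forall_setLIntegral_le_of_sigmaFinite (Measure.measurable_rnDeriv _ _)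
      (fun s hs _ => ?_)
    refine (Measure.setLIntegral_rnDeriv_le s).trans ?_
    simpa using h s
  obtain ⟨M, hM⟩ := (isCompact_Icc (a := (0 : ℝ)) (b := C.toReal)).exists_bound_of_continuousOn
    continuous_klFun.continuousOn
  refine Integrable.of_bound (C := M) 
    (measurable_klFun.comp (Measure.measurable_rnDeriv J Q).ennreal_toReal).aestronglyMeasurable ?_
  filter_upwards [hb] with x hx
  exact hM _ ⟨ENNReal.toReal_nonneg, ENNReal.toReal_mono hC hx⟩

lemma hm_mutualInfo_eq {Ω : Type*} [MeasurableSpace Ω] (P : Measure Ω) [IsProbabilityMeasure P]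
    (X : Ω → Bool) (Y : Ω → ℂ) (hX : Measurable X) (hY : Measurable Y) :
    mutualInfo P X Y =
      (klDiv (P.map fun ω => (X ω, Y ω)) ((P.map X).prod (P.map Y))).toReal / Real.log 2 ∧
    klDiv (P.map fun ω => (X ω, Y ω)) ((P.map X).prod (P.map Y)) ≠ ∞ := by
  have : IsProbabilityMeasure (P.map X) := Measure.isProbabilityMeasure_map (by fun_prop)
  have : IsProbabilityMeasure (P.map Y) := Measure.isProbabilityMeasure_map (by fun_prop)
  have : IsProbabilityMeasure (P.map fun ω => (X ω, Y ω)) :=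
    Measure.isProbabilityMeasure_map (by fun_prop)
  obtain ⟨C, hC, h⟩ := hm_le P X Y hX hY
  obtain ⟨h1, h2⟩ := hm_klDiv_ne_top _ _ C hC h
  refine ⟨?_, h2⟩
  rw [toReal_klDiv_of_measure_eq h1 (by simp), mutualInfo, klDiv2, ← integral_div]
  rfl

lemma hm_klDiv_le {Ω Λ : Type*} [MeasurableSpace Ω] [MeasurableSpace Λ]
    (P : Measure Ω) [IsProbabilityMeasure P]
    (B : Ω → Λ) (hB : Measurable B) (x : Λ → Bool) (hx : Measurable x) (z : Λ → ℂ)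
    (hz : Measurable z) (v : ℝ≥0) (N : Ω → ℂ) (hN : Measurable N)
    (law : P.map N = complexGaussian v) (hind : IndepFun B N P) (ρ : ℝ) (hρ : 1 ≤ ρ) :
    klDiv (P.map fun ω => (x (B ω), z (B ω) + N ω))
        ((P.map fun ω => x (B ω)).prod (P.map fun ω => z (B ω) + N ω)) ≤
      klDiv (P.map fun ω => (x (B ω), (ρ : ℂ) * z (B ω) + N ω))
        ((P.map fun ω => x (B ω)).prod (P.map fun ω => (ρ : ℂ) * z (B ω) + N ω)) := by
  have hρ0 : 0 < ρ := by linarith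
  have hinv : ρ⁻¹ ^ 2 ≤ 1 := by
    have h1 : ρ⁻¹ ≤ 1 := inv_le_one_of_one_le₀ hρ
    have h2 : 0 ≤ ρ⁻¹ := by positivity
    nlinarith
  let w : ℝ≥0 := ⟨(1 - ρ⁻¹ ^ 2) * v, mul_nonneg (by linarith) v.2⟩
  have hw : (v : ℝ) = ρ⁻¹ ^ 2 * v + w := by
    change (v : ℝ) = ρ⁻¹ ^ 2 * v + (1 - ρ⁻¹ ^ 2) * v
    ring
  have hG := hm_cG_scale v w ρ⁻¹ hw
  set G := complexGaussian v with hGdef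
  set G' := complexGaussian w with hG'def
  set L := P.map B with hL
  have : IsProbabilityMeasure L := Measure.isProbabilityMeasure_map (by fun_prop)
  have : IsProbabilityMeasure (P.map fun ω => x (B ω)) :=
    Measure.isProbabilityMeasure_map (by fun_prop)
  have : IsProbabilityMeasure (P.map fun ω => (ρ : ℂ) * z (B ω) + N ω) :=
    Measure.isProbabilityMeasure_map (by fun_prop)
  have hLN : P.map (fun ω => (B ω, N ω)) = L.prod G := by
    rw [(indepFun_iff_map_prod_eq_prod_map_map hB.aemeasurable hN.aemeasurable).1 hind, law]
  set Jρ := P.map fun ω => (x (B ω), (ρ : ℂ) * z (B ω) + N ω) with hJρ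
  have : IsProbabilityMeasure Jρ := Measure.isProbabilityMeasure_map (by fun_prop)
  have hJρ' : Jρ = (L.prod G).map fun p => (x p.1, (ρ : ℂ) * z p.1 + p.2) := by
    rw [← hLN, Measure.map_map (by fun_prop) (by fun_prop)]
    rfl
  let k : ℂ × ℂ → ℂ := fun p => ((ρ⁻¹ : ℝ) : ℂ) * p.1 + p.2
  have hk : Measurable k := by fun_prop
  let g : (Bool × ℂ) × ℂ → Bool × ℂ := fun p => (p.1.1, k (p.1.2, p.2))
  have hg : Measurable g := by fun_prop
  have hJ1 : (P.map fun ω => (x (B ω), z (B ω) + N ω)) = (Jρ.prod G').map g := by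
    have e1 : (P.map fun ω => (x (B ω), z (B ω) + N ω))
        = (L.prod G).map fun p => (x p.1, z p.1 + p.2) := by
      rw [← hLN, Measure.map_map (by fun_prop) (by fun_prop)]
      rfl
    have e2 : Jρ.prod G' = ((L.prod G).prod G').map
        (Prod.map (fun p => (x p.1, (ρ : ℂ) * z p.1 + p.2)) id) := by
      rw [← Measure.map_prod_map _ _ (by fun_prop) (by fun_prop), Measure.map_id, hJρ']
    have e3 : L.prod G = ((L.prod G).prod G').map
        ((Prod.map id k) ∘ MeasurableEquiv.prodAssoc) := by
      rw [← Measure.map_map (by fun_prop) (by fun_prop),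
        (measurePreserving_prodAssoc L G G').map_eq,
        ← Measure.map_prod_map _ _ (by fun_prop) (by fun_prop), Measure.map_id, hG]
    rw [e1, e2, Measure.map_map hg (by fun_prop)]
    conv_lhs => rw [e3]
    rw [Measure.map_map (by fun_prop) (by fun_prop)]
    congr 1
    ext1 ⟨⟨l, n⟩, n'⟩
    simp only [Function.comp, Prod.map, g, k, MeasurableEquiv.prodAssoc, MeasurableEquiv.coe_mk,
      Equiv.prodAssoc_apply, id]
    have : (ρ : ℂ) ≠ 0 := by exact_mod_cast hρ0.ne'
    congr 1
    push_cast
    field_simp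
    ring
  have hY1 : (P.map fun ω => z (B ω) + N ω)
      = ((P.map fun ω => (ρ : ℂ) * z (B ω) + N ω).prod G').map k := by
    have e1 : (P.map fun ω => z (B ω) + N ω)
        = (P.map fun ω => (x (B ω), z (B ω) + N ω)).map Prod.snd := by
      rw [Measure.map_map (by fun_prop) (by fun_prop)]
      rfl
    have e2 : (P.map fun ω => (ρ : ℂ) * z (B ω) + N ω) = Jρ.map Prod.snd := by
      rw [hJρ, Measure.map_map (by fun_prop) (by fun_prop)]
      rfl
    rw [e1, hJ1, e2, Measure.map_map (by fun_prop) (by fun_prop)]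
    conv_rhs => rw [← Measure.map_id (μ := G')]
    rw [Measure.map_prod_map _ _ (by fun_prop) (by fun_prop),
      Measure.map_map (by fun_prop) (by fun_prop)]
    rfl
  set MB := P.map fun ω => x (B ω)
  set MY := P.map fun ω => (ρ : ℂ) * z (B ω) + N ω
  have hQ1 : MB.prod (P.map fun ω => z (B ω) + N ω) = ((MB.prod MY).prod G').map g := by
    have e : g = (Prod.map id k) ∘ MeasurableEquiv.prodAssoc := rfl
    rw [hY1, e, ← Measure.map_map (by fun_prop) (by fun_prop),
        (measurePreserving_prodAssoc MB MY G').map_eq,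
        ← Measure.map_prod_map _ _ (by fun_prop) (by fun_prop), Measure.map_id]
  rw [hJ1, hQ1]
  refine (klDiv_map_le _ _ hg).trans ?_
  rw [← Measure.compProd_const, ← Measure.compProd_const, klDiv_compProd_left]

theorem hm_amplify_HP_rate
    {Ω : Type*} [MeasurableSpace Ω] (P : Measure Ω) [IsProbabilityMeasure P]
    (mH mL : ℕ) (hmH : 0 < mH) (hmL : 0 < mL)
    (μc : (Fin mH → Bool) × (Fin mL → Bool) → ℂ)
    (BH : Ω → Fin mH → Bool) (BL : Ω → Fin mL → Bool)
    (hBH : Measurable BH) (hBL : Measurable BL)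
    (hUnif : P.map (fun ω => (BH ω, BL ω)) =
      (PMF.uniformOfFintype ((Fin mH → Bool) × (Fin mL → Bool))).toMeasure)
    (σH2 : ℝ≥0) (hσH2 : 0 < σH2)
    (NH : Ω → ℂ) (hNHMeas : Measurable NH)
    (lawNH : P.map NH = complexGaussian σH2)
    (hIndepNH : IndepFun (fun ω => (BH ω, BL ω)) NH P)
    (ρ : ℝ) (hρ : 1 ≤ ρ) :
    ∑ i : Fin mH,
        mutualInfo P (fun ω => BH ω i) (fun ω => (ρ : ℂ) * μc (BH ω, BL ω) + NH ω) ≥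
      ∑ i : Fin mH,
        mutualInfo P (fun ω => BH ω i) (fun ω => μc (BH ω, BL ω) + NH ω) := by
  rw [ge_iff_le]
  refine Finset.sum_le_sum fun i _ => ?_
  have hz : Measurable μc := measurable_of_countable _
  have hB : Measurable fun ω => (BH ω, BL ω) := hBH.prodMk hBL
  have hx : Measurable fun ω => BH ω i := (measurable_pi_apply i).comp hBH
  have hy : Measurable fun ω => μc (BH ω, BL ω) := hz.comp hB
  obtain ⟨h1, h1'⟩ := hm_mutualInfo_eq P (fun ω => BH ω i)
    (fun ω => μc (BH ω, BL ω) + NH ω) hx (hy.add hNHMeas)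
  obtain ⟨h2, h2'⟩ := hm_mutualInfo_eq P (fun ω => BH ω i)
    (fun ω => (ρ : ℂ) * μc (BH ω, BL ω) + NH ω) hx ((hy.const_mul _).add hNHMeas)
  rw [h1, h2]
  have hlog : 0 ≤ Real.log 2 := Real.log_nonneg (by norm_num)
  refine div_le_div_of_nonneg_right (ENNReal.toReal_mono h2' ?_) hlog
  exact hm_klDiv_le P (fun ω => (BH ω, BL ω)) hB (fun l => l.1 i)
    (measurable_of_countable _) μc hz σH2 NH hNHMeas lawNH hIndepNH ρ hρ
end
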